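/- Let f ∈ S⁰ satisfy ρ(f) = 0 and ρ(f²) > 0, let {a_d}_{d∈ℕ} be a sluggish sequence, and for each d let (X_{1,d},…,X_{d,d}) have law with density ρ_d. Then for every closed set F ⊆ ℝ: limsup_{d→∞} a_d^{−2}·log P[Σ_{i=1}^d f(X_{i,d})/(a_d√d) ∈ F] ≤ −inf{x²/(2ρ(f²)) : x ∈ F}. -/

import Mathlib

/-!
# Moderate deviations upper bound for i.i.d. sums with sub-exponential summands

The summands `f (Xᵢ)` have all polynomial moments but in general no exponential moment, so
Chernoff's bound is applied after truncating `f` from above at the level `t = d^{1/4}`.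

* **Moments.** Super-exponential tails make `exp |x| ρ(x)` integrable (`integrable_exp_abs_mul`), and
  `|f|ᵖ` is dominated by a multiple of `exp |x|`; hence `ρ(|f|ᵖ) < ∞` for every `p`
  (`integrable_pow_mul`).
* **Truncated sum.** From `eᵘ ≤ 1 + u + (u²/2) eᴮ` for `u ≤ B` and `ρ(f) = 0`, the truncation `g` of
  `f` satisfies `ρ(exp (l g)) ≤ exp (l² σ² e^{l t} / 2)` with `σ² = ρ(f²)`. For
  `l = (r/σ²) a_d / √d` one has `l t → 0`, because `a_d d^{-1/4} → 0` for a sluggish sequence, and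
  Chernoff's bound at `r a_d √d` becomes `exp (-(1 + o(1)) a_d² r²/(2σ²))` (`chernoff_trunc`).
* **Truncated part.** By Markov's inequality some `f (Xᵢ)` exceeds `t` with probability at most
  `C_p d^{1 - p/4}`. Since `a_d² ≤ M log d`, a large `p` makes this smaller than `exp (-c a_d²)` for
  any prescribed `c` (`eventually_exceed_le`). This is the step that needs `a_d = O(√(log d))`.

The two estimates give the half-line bound `one_sided`. A nonempty closed `F` is contained in
`{|z| ≥ |y|}` with `y ∈ F` of least absolute value, so `one_sided` for `f` and `-f` with `r = |y|`
bounds the probability at the rate `y²/(2σ²)`, which is the value of the rate function at a point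
of `F`.
-/

open MeasureTheory ProbabilityTheory Filter Set

noncomputable section

/-- The exponentially-weighted sup-norm `‖g‖_{∞,s} = sup_x e^{-s|x|} |g x|`. -/
def normIS (g : ℝ → ℝ) (s : ℝ) : ℝ := ⨆ x : ℝ, Real.exp (-(s * |x|)) * |g x|

/-- Membership in the space `Sⁿ`: `n`-times continuously differentiable with all
iterated derivatives up to order `n` of sub-exponential growth. -/
def MemS (n : ℕ) (g : ℝ → ℝ) : Prop :=
  ContDiff ℝ n g ∧ ∀ s > (0:ℝ), ∀ i ≤ n,
    BddAbove (Set.range fun x => Real.exp (-(s * |x|)) * |iteratedDeriv i g x|)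

/-- A positive sequence is sluggish if it tends to infinity but `a d / √(log d)` stays bounded. -/
def Sluggish (a : ℕ → ℝ) : Prop :=
  (∀ d, 0 < a d) ∧ Tendsto a atTop atTop ∧
    ∃ M : ℝ, ∀ d : ℕ, 2 ≤ d → a d / Real.sqrt (Real.log d) ≤ M

/-- `(log ρ)'` -/
def dl (ρ : ℝ → ℝ) : ℝ → ℝ := deriv fun x => Real.log (ρ x)

/-- `(log ρ)''` -/
def d2l (ρ : ℝ → ℝ) : ℝ → ℝ := deriv (dl ρ)

/-- `ρ(g) = ∫ g dρ` -/
def rhoE (ρ g : ℝ → ℝ) : ℝ := ∫ x, g x * ρ x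

/-- `J = ρ(((log ρ)')²)` -/
def Jc (ρ : ℝ → ℝ) : ℝ := rhoE ρ fun x => (dl ρ x) ^ 2

/-- super-exponential tails: `(x/|x|)·(log ρ)'(x) → -∞` as `|x| → ∞`. -/
def SuperExpTails (ρ : ℝ → ℝ) : Prop :=
  Tendsto (dl ρ) atTop atBot ∧ Tendsto (dl ρ) atBot atTop

/-- standard normal CDF -/
def stdCDF (t : ℝ) : ℝ := ((gaussianReal 0 1) (Set.Iic t)).toReal

/-- the constant `h(l) = 2l²Φ(-l√J/2)` -/
def hc (ρ : ℝ → ℝ) (l : ℝ) : ℝ := 2 * l ^ 2 * stdCDF (-(l * Real.sqrt (Jc ρ)) / 2)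

/-- the limiting (Langevin) generator `G f = (h(l)/2)(f'' + (log ρ)' f')` -/
def Gop (ρ : ℝ → ℝ) (l : ℝ) (f : ℝ → ℝ) (x : ℝ) : ℝ :=
  hc ρ l / 2 * (deriv (deriv f) x + dl ρ x * deriv f x)

/-- the product measure `ρ_d` on `ℝ^d` -/
def pm (ρ : ℝ → ℝ) (d : ℕ) : Measure (Fin d → ℝ) :=
  Measure.pi fun _ => volume.withDensity fun x => ENNReal.ofReal (ρ x)

/-- law of the proposal `Y ~ N(x, l²/d · I_d)` -/
def gaussPi (l : ℝ) (d : ℕ) (x : Fin d → ℝ) : Measure (Fin d → ℝ) :=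
  Measure.pi fun i => gaussianReal (x i) ((l ^ 2 / (d:ℝ)).toNNReal)

/-- the RWM generator `G_d` -/
def Gd (ρ : ℝ → ℝ) (l : ℝ) (d : ℕ) [NeZero d] (f : ℝ → ℝ) (x : Fin d → ℝ) : ℝ :=
  (d:ℝ) * ∫ y, (f (y 0) - f (x 0)) * min 1 ((∏ i, ρ (y i)) / ∏ i, ρ (x i)) ∂(gaussPi l d x)

/-- the set `A` associated with the constant `c_A` -/
def Aset (ρ : ℝ → ℝ) (c : ℝ) : Set ℝ :=
  {x | |d2l ρ x| < (dl ρ x) ^ 2 ∧ 1 / c < |dl ρ x| ∧ |dl ρ x| < c}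

/-- indices `2,…,d` (all coordinates except the first) -/
def restIdx (d : ℕ) : Finset (Fin d) := Finset.univ.filter fun i => (i : ℕ) ≠ 0

/-- the typical sets `𝒜_d` -/
def Ad (ρ : ℝ → ℝ) (c : ℝ) (a : ℕ → ℝ) (d : ℕ) : Set (Fin d → ℝ) :=
  {x | (1 / ((d : ℝ) - 1)) * ∑ i ∈ restIdx d, Real.exp |x i| < 2 * rhoE ρ (fun t => Real.exp |t|)
    ∧ (∫ t in Aset ρ c, ρ t) / 2 <
        (1 / ((d : ℝ) - 1)) * ∑ i ∈ restIdx d, (Aset ρ c).indicator (fun _ => (1:ℝ)) (x i)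
    ∧ (1 / ((d : ℝ) - 1)) * |∑ i ∈ restIdx d, ((dl ρ (x i)) ^ 2 - Jc ρ)| <
        a d / Real.sqrt d * Real.sqrt (3 * rhoE ρ fun t => ((dl ρ t) ^ 2 - Jc ρ) ^ 2)
    ∧ (1 / ((d : ℝ) - 1)) * |∑ i ∈ restIdx d, (d2l ρ (x i) + Jc ρ)| <
        a d / Real.sqrt d * Real.sqrt (3 * rhoE ρ fun t => (d2l ρ t + Jc ρ) ^ 2)}

/-- `K(x,y)` -/
def Kf (ρ : ℝ → ℝ) (c : ℝ) (x y : ℝ) : ℝ :=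
  dl ρ x * (y - x) + d2l ρ x / 2 * (y - x) ^ 2
    + (dl ρ x) ^ 3 * (Aset ρ c).indicator (fun _ => (1:ℝ)) x / 3 * (y - x) ^ 3

/-- `Σ_{i=2}^d K(x_i, Y_i)` -/
def SK (ρ : ℝ → ℝ) (c : ℝ) (d : ℕ) (x Y : Fin d → ℝ) : ℝ :=
  ∑ i ∈ restIdx d, Kf ρ c (x i) (Y i)

/-- `β(x,y)` -/
def betaF (ρ : ℝ → ℝ) (c l : ℝ) (d : ℕ) [NeZero d] (x : Fin d → ℝ) (y : ℝ) : ℝ :=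
  ∫ Y, min 1 (Real.exp (dl ρ (x 0) * (y - x 0) + SK ρ c d x Y)) ∂(gaussPi l d x)

/-- `G̃_d` -/
def tGd (ρ : ℝ → ℝ) (c l : ℝ) (d : ℕ) [NeZero d] (f : ℝ → ℝ) (x : Fin d → ℝ) : ℝ :=
  (d:ℝ) * ∫ y, (f y - f (x 0)) * betaF ρ c l d x y
    ∂(gaussianReal (x 0) ((l ^ 2 / (d:ℝ)).toNNReal))

/-- `Ĝ_d` -/
def hGd (ρ : ℝ → ℝ) (c l : ℝ) (d : ℕ) [NeZero d] (f : ℝ → ℝ) (x : Fin d → ℝ) : ℝ :=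
  l ^ 2 / 2 * deriv (deriv f) (x 0) * (∫ Y, min 1 (Real.exp (SK ρ c d x Y)) ∂(gaussPi l d x))
    + l ^ 2 * deriv f (x 0) * dl ρ (x 0) *
      (∫ Y, (Set.Iio (0:ℝ)).indicator Real.exp (SK ρ c d x Y) ∂(gaussPi l d x))

/-- `𝒩(x,Y)` -/
def Nf (ρ : ℝ → ℝ) (l : ℝ) (d : ℕ) (x Y : Fin d → ℝ) : ℝ :=
  l ^ 2 / (2 * (d:ℝ)) * ∑ i ∈ restIdx d, d2l ρ (x i)
    + ∑ i ∈ restIdx d, dl ρ (x i) * (Y i - x i)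

/-- `Ğ_d` -/
def bGd (ρ : ℝ → ℝ) (l : ℝ) (d : ℕ) [NeZero d] (f : ℝ → ℝ) (x : Fin d → ℝ) : ℝ :=
  l ^ 2 / 2 * deriv (deriv f) (x 0) * (∫ Y, min 1 (Real.exp (Nf ρ l d x Y)) ∂(gaussPi l d x))
    + l ^ 2 * deriv f (x 0) * dl ρ (x 0) *
      (∫ Y, (Set.Iio (0:ℝ)).indicator Real.exp (Nf ρ l d x Y) ∂(gaussPi l d x))

/-! ### The exponential bound for the truncated sum -/

theorem exp_le_quadratic {u B : ℝ} (huB : u ≤ B) (hB : 0 ≤ B) :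
    Real.exp u ≤ 1 + u + u ^ 2 / 2 * Real.exp B := by
  rcases le_total u 0 with hu | hu
  · -- With `v = -u`: `1 + v + v²/2 ≤ eᵛ` and `(1 + v + v²/2)(1 - v + v²/2) = 1 + v⁴/4 ≥ 1`.
    have h1 := Real.quadratic_le_exp_of_nonneg (neg_nonneg.2 hu)
    have h3 : Real.exp u * Real.exp (-u) = 1 := by rw [← Real.exp_add]; simp
    have h4 : Real.exp u ≤ 1 + u + u ^ 2 / 2 := by
      have hq : 0 < 1 + u + u ^ 2 / 2 := by nlinarith [sq_nonneg (u + 1)]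
      by_contra! h
      have : (1 + u + u ^ 2 / 2) * (1 + -u + (-u) ^ 2 / 2) < 1 := by
        refine lt_of_lt_of_eq ?_ h3
        exact mul_lt_mul h h1 (by nlinarith [sq_nonneg (u - 1)]) (Real.exp_pos _).le
      nlinarith [sq_nonneg (u ^ 2)]
    have h5 : 1 ≤ Real.exp B := Real.one_le_exp hB
    nlinarith [sq_nonneg u]
  · -- `v ↦ (1 + v) e⁻ᵛ + v²/2` is nondecreasing on `[0, ∞)`, with value `1` at `0`.
    have hmono : MonotoneOn (fun v : ℝ => (1 + v) * Real.exp (-v) + v ^ 2 / 2) (Ici 0) := by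
      have hd : ∀ v : ℝ, HasDerivAt (fun v : ℝ => (1 + v) * Real.exp (-v) + v ^ 2 / 2)
          (v * (1 - Real.exp (-v))) v := by
        intro v
        have h1 : HasDerivAt (fun v : ℝ => Real.exp (-v)) (Real.exp (-v) * -1) v :=
          (hasDerivAt_neg v).exp
        have h2 : HasDerivAt (fun v : ℝ => 1 + v) 1 v := (hasDerivAt_id v).const_add 1
        have h3 : HasDerivAt (fun v : ℝ => v ^ 2 / 2) v v := by
          simpa using (hasDerivAt_pow 2 v).div_const 2
        exact ((h2.mul h1).add h3).congr_deriv (by ring)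
      refine monotoneOn_of_deriv_nonneg (convex_Ici 0)
        (fun v _ => (hd v).continuousAt.continuousWithinAt)
        (fun v _ => (hd v).differentiableAt.differentiableWithinAt) ?_
      intro v hv
      rw [interior_Ici] at hv
      rw [(hd v).deriv]
      have hv' : 0 < v := hv
      exact mul_nonneg hv'.le (sub_nonneg.2 (Real.exp_le_one_iff.2 (by linarith)))
    have h1 := hmono (mem_Ici.2 le_rfl) (mem_Ici.2 hu) hu
    simp only [add_zero, neg_zero, Real.exp_zero, mul_one] at h1
    have h3 : Real.exp u * Real.exp (-u) = 1 := by rw [← Real.exp_add]; simp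
    have h2 : Real.exp u ≤ 1 + u + u ^ 2 / 2 * Real.exp u := by
      have := mul_le_mul_of_nonneg_left h1 (Real.exp_pos u).le
      have e : Real.exp u * ((1 + u) * Real.exp (-u) + u ^ 2 / 2)
          = (1 + u) * (Real.exp u * Real.exp (-u)) + u ^ 2 / 2 * Real.exp u := by ring
      rw [e, h3] at this
      linarith
    have h4 := mul_le_mul_of_nonneg_left (Real.exp_le_exp.2 huB) (by positivity : 0 ≤ u ^ 2 / 2)
    linarith

/-- The one-sided truncation of `f` at level `t`: the value is replaced by `0` where `f > t`. The
negative part is left alone, so for `t ≥ 0` truncating can only lower `f`, and in particular its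
mean. -/
def trunc (f : ℝ → ℝ) (t : ℝ) (x : ℝ) : ℝ := if f x ≤ t then f x else 0

theorem measurable_trunc {f : ℝ → ℝ} (hf : Measurable f) (t : ℝ) : Measurable (trunc f t) :=
  Measurable.ite (measurableSet_le hf measurable_const) hf measurable_const

/-- The right-hand side involves `f` rather than its truncation, so that no estimate of the
truncation bias is needed after integrating. -/
theorem exp_trunc_le (f : ℝ → ℝ) {l t : ℝ} (hl : 0 ≤ l) (ht : 0 ≤ t) (x : ℝ) :
    Real.exp (l * trunc f t x) ≤
      1 + l * f x + l ^ 2 / 2 * Real.exp (l * t) * f x ^ 2 := by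
  unfold trunc
  split_ifs with h
  · refine (exp_le_quadratic (mul_le_mul_of_nonneg_left h hl) (by positivity)).trans
      (le_of_eq (by ring))
  · push Not at h
    have : 0 ≤ l * f x := mul_nonneg hl (ht.trans h.le)
    have : 0 ≤ l ^ 2 / 2 * Real.exp (l * t) * f x ^ 2 := by positivity
    simp only [mul_zero, Real.exp_zero]
    linarith

theorem chernoff_trunc (ν : Measure ℝ) [IsProbabilityMeasure ν] {f : ℝ → ℝ} (hf : Measurable f)
    (h1 : Integrable f ν) (h2 : Integrable (fun x => f x ^ 2) ν) (h0 : ∫ x, f x ∂ν = 0)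
    {l t : ℝ} (hl : 0 ≤ l) (ht : 0 ≤ t) (d : ℕ) (A : ℝ) :
    (Measure.pi fun _ : Fin d => ν).real {x | A ≤ ∑ i, trunc f t (x i)} ≤
      Real.exp (-(l * A) + d * (l ^ 2 / 2 * Real.exp (l * t) * ∫ x, f x ^ 2 ∂ν)) := by
  have hA : Integrable (fun x => 1 + l * f x) ν := (integrable_const _).add (h1.const_mul _)
  have hR : Integrable (fun x => 1 + l * f x + l ^ 2 / 2 * Real.exp (l * t) * f x ^ 2) ν :=
    hA.add (h2.const_mul _)
  have hI : Integrable (fun x => Real.exp (l * trunc f t x)) ν := by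
    refine hR.mono' ((measurable_trunc hf t).const_mul l).exp.aestronglyMeasurable
      (ae_of_all _ fun x => ?_)
    rw [Real.norm_of_nonneg (Real.exp_pos _).le]
    exact exp_trunc_le f hl ht x
  have hle : ∫ x, Real.exp (l * trunc f t x) ∂ν ≤
      Real.exp (l ^ 2 / 2 * Real.exp (l * t) * ∫ x, f x ^ 2 ∂ν) := by
    refine (integral_mono hI hR fun x => exp_trunc_le f hl ht x).trans ?_
    rw [integral_add hA (h2.const_mul _),
      integral_add (integrable_const _) (h1.const_mul _), integral_const_mul, integral_const_mul,
      h0]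
    simp only [integral_const, probReal_univ, smul_eq_mul, mul_one, mul_zero, add_zero]
    rw [add_comm]
    exact Real.add_one_le_exp _
  have hprod : ∀ x : Fin d → ℝ, Real.exp (l * ∑ i, trunc f t (x i)) =
      ∏ i, Real.exp (l * trunc f t (x i)) := by
    intro x
    rw [Finset.mul_sum, Real.exp_sum]
  have hIp : Integrable (fun x : Fin d → ℝ => Real.exp (l * ∑ i, trunc f t (x i)))
      (Measure.pi fun _ : Fin d => ν) := by
    simp_rw [hprod]
    exact Integrable.fintype_prod (f := fun _ x => Real.exp (l * trunc f t x)) fun _ => hI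
  refine (measure_ge_le_exp_mul_mgf (X := fun x : Fin d → ℝ => ∑ i, trunc f t (x i)) A hl
    hIp).trans ?_
  rw [Real.exp_add, neg_mul]
  refine mul_le_mul_of_nonneg_left ?_ (Real.exp_pos _).le
  unfold mgf
  simp_rw [hprod]
  rw [integral_fintype_prod_eq_pow (fun x => Real.exp (l * trunc f t x)), Fintype.card_fin,
    Real.exp_nat_mul]
  exact pow_le_pow_left₀ (integral_nonneg fun x => (Real.exp_pos _).le) hle _

/-- Union bound and Markov's inequality of order `p` for the event that some `f (xᵢ)` is cut off by
the truncation. -/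
theorem exceed_le (ν : Measure ℝ) [IsProbabilityMeasure ν] {f : ℝ → ℝ}
    {p : ℕ} (hp : Integrable (fun x => |f x| ^ p) ν) {t : ℝ} (ht : 0 < t) (d : ℕ) :
    (Measure.pi fun _ : Fin d => ν).real {x | ∃ i, t < f (x i)} ≤
      d * ((∫ x, |f x| ^ p ∂ν) / t ^ p) := by
  have hset : {x : Fin d → ℝ | ∃ i, t < f (x i)} = ⋃ i, {x | t < f (x i)} := by
    ext x; simp
  rw [hset]
  refine (measureReal_iUnion_fintype_le _).trans ?_
  have : ∀ i : Fin d, (Measure.pi fun _ : Fin d => ν).real {x | t < f (x i)} ≤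
      (∫ x, |f x| ^ p ∂ν) / t ^ p := by
    intro i
    have hm := measurePreserving_eval (fun _ : Fin d => ν) i
    have hint : Integrable (fun x : Fin d → ℝ => |f (x i)| ^ p) (Measure.pi fun _ => ν) :=
      hm.integrable_comp_of_integrable hp
    have hM := mul_meas_ge_le_integral_of_nonneg (ae_of_all _ fun x => by positivity) hint (t ^ p)
    rw [integral_comp_eval (μ := fun _ : Fin d => ν) (f := fun x => |f x| ^ p)
      hp.aestronglyMeasurable] at hM
    rw [le_div_iff₀ (by positivity), mul_comm]
    refine le_trans (mul_le_mul_of_nonneg_left (measureReal_mono ?_) (by positivity)) hM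
    intro x hx
    exact pow_le_pow_left₀ ht.le ((le_of_lt hx).trans (le_abs_self _)) p
  refine (Finset.sum_le_sum fun i _ => this i).trans ?_
  simp

/-! ### One-sided moderate deviations -/

theorem Sluggish.sq_le {a : ℕ → ℝ} (ha : Sluggish a) :
    ∃ M : ℝ, ∀ d : ℕ, 2 ≤ d → a d ^ 2 ≤ M * Real.log d := by
  obtain ⟨hpos, -, M, hM⟩ := ha
  refine ⟨M ^ 2, fun d hd => ?_⟩
  have hlog : 0 < Real.log d := Real.log_pos (by exact_mod_cast hd)
  have h1 := (div_le_iff₀ (Real.sqrt_pos.2 hlog)).1 (hM d hd)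
  calc a d ^ 2 ≤ (M * Real.sqrt (Real.log d)) ^ 2 := pow_le_pow_left₀ (hpos d).le h1 2
    _ = M ^ 2 * Real.log d := by rw [mul_pow, Real.sq_sqrt hlog.le]

theorem Sluggish.tendsto_sq {a : ℕ → ℝ} (ha : Sluggish a) :
    Tendsto (fun d => a d ^ 2) atTop atTop :=
  (tendsto_pow_atTop two_ne_zero).comp ha.2.1

theorem Sluggish.tendsto_div {a : ℕ → ℝ} (ha : Sluggish a) :
    Tendsto (fun d : ℕ => a d / √√(d : ℝ)) atTop (nhds 0) := by
  obtain ⟨M, hM⟩ := ha.sq_le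
  have h1 : Tendsto (fun d : ℕ => M * (Real.log d / √(d : ℝ))) atTop (nhds 0) := by
    have h := ((isLittleO_log_rpow_atTop (r := 1 / 2) (by norm_num)).tendsto_div_nhds_zero.comp
      tendsto_natCast_atTop_atTop).const_mul M
    simpa [Real.sqrt_eq_rpow, Function.comp_def] using h
  have h2 : Tendsto (fun d : ℕ => a d ^ 2 / √(d : ℝ)) atTop (nhds 0) := by
    refine squeeze_zero' (Eventually.of_forall fun d => by positivity) ?_ h1
    filter_upwards [eventually_ge_atTop 2] with d hd
    rw [← mul_div_assoc]
    exact div_le_div_of_nonneg_right (hM d hd) (Real.sqrt_nonneg _)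
  have h3 := (Real.continuous_sqrt.tendsto 0).comp h2
  rw [Real.sqrt_zero] at h3
  refine h3.congr fun d => ?_
  simp only [Function.comp_apply]
  rw [Real.sqrt_div (sq_nonneg _), Real.sqrt_sq (ha.1 d).le]

/-- Two terms decaying at speed `a²` with rate `c'` sum to a term with any smaller rate: the factor
`2` is absorbed because `a² → ∞`. -/
theorem eventually_add_le {a : ℕ → ℝ} (ha : Sluggish a) {c c' : ℝ} (hc : c < c') {u v : ℕ → ℝ}
    (hu : ∀ᶠ d in atTop, u d ≤ Real.exp (-(c' * a d ^ 2)))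
    (hv : ∀ᶠ d in atTop, v d ≤ Real.exp (-(c' * a d ^ 2))) :
    ∀ᶠ d in atTop, u d + v d ≤ Real.exp (-(c * a d ^ 2)) := by
  have h1 : Tendsto (fun d => (c' - c) * a d ^ 2) atTop atTop :=
    ha.tendsto_sq.const_mul_atTop (sub_pos.2 hc)
  filter_upwards [hu, hv, h1.eventually_ge_atTop 1] with d hud hvd hd
  have h2 : 2 ≤ Real.exp ((c' - c) * a d ^ 2) := by
    have := Real.add_one_le_exp ((c' - c) * a d ^ 2)
    linarith
  have h3 : Real.exp (-(c * a d ^ 2)) =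
      Real.exp ((c' - c) * a d ^ 2) * Real.exp (-(c' * a d ^ 2)) := by
    rw [← Real.exp_add]; congr 1; ring
  have h4 := mul_le_mul_of_nonneg_right h2 (Real.exp_pos (-(c' * a d ^ 2))).le
  linarith

/-- At the truncation level `d^{1/4}` the probability that some `f (xᵢ)` is cut off decays faster
than `exp (-c a²)` for every `c ≥ 0`: by the polynomial moments it is smaller than any power of `d`,
while sluggishness makes `exp (-c a²)` at least some power of `d`. -/
theorem eventually_exceed_le (ν : Measure ℝ) [IsProbabilityMeasure ν] {f : ℝ → ℝ}
    (hmom : ∀ p : ℕ, Integrable (fun x => |f x| ^ p) ν) {a : ℕ → ℝ} (ha : Sluggish a)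
    {c : ℝ} (hc : 0 ≤ c) :
    ∀ᶠ d : ℕ in atTop, (Measure.pi fun _ : Fin d => ν).real {x | ∃ i, √√(d : ℝ) < f (x i)} ≤
      Real.exp (-(c * a d ^ 2)) := by
  obtain ⟨M, hM⟩ := ha.sq_le
  obtain ⟨k, hk⟩ := exists_nat_ge (c * M)
  set C := ∫ x, |f x| ^ (4 * (k + 2)) ∂ν
  filter_upwards [eventually_ge_atTop 2, tendsto_natCast_atTop_atTop.eventually_ge_atTop C]
    with d hd hdC
  have hd0 : (0 : ℝ) < d := by exact_mod_cast (by lia : 0 < d)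
  have hlog : 0 < Real.log d := Real.log_pos (by exact_mod_cast hd)
  refine (exceed_le ν (hmom (4 * (k + 2))) (by positivity : 0 < √√(d : ℝ)) d).trans ?_
  have h4 : √√(d : ℝ) ^ (4 * (k + 2)) = (d : ℝ) ^ (k + 2) := by
    rw [pow_mul]
    congr 1
    rw [show (4 : ℕ) = 2 * 2 from rfl, pow_mul, Real.sq_sqrt (Real.sqrt_nonneg _),
      Real.sq_sqrt hd0.le]
  rw [h4]
  calc (d : ℝ) * (C / (d : ℝ) ^ (k + 2)) ≤ d * (d / (d : ℝ) ^ (k + 2)) := by gcongr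
    _ = ((d : ℝ) ^ k)⁻¹ := by field_simp; ring
    _ = Real.exp (-(k * Real.log d)) := by
      rw [Real.exp_neg, Real.exp_nat_mul, Real.exp_log hd0]
    _ ≤ Real.exp (-(c * a d ^ 2)) := by
      rw [Real.exp_le_exp, neg_le_neg_iff]
      calc c * a d ^ 2 ≤ c * (M * Real.log d) := mul_le_mul_of_nonneg_left (hM d hd) hc
        _ = c * M * Real.log d := by ring
        _ ≤ k * Real.log d := mul_le_mul_of_nonneg_right hk hlog.le

theorem one_sided (ν : Measure ℝ) [IsProbabilityMeasure ν] {f : ℝ → ℝ} (hf : Measurable f)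
    (hmom : ∀ p : ℕ, Integrable (fun x => |f x| ^ p) ν) (h0 : ∫ x, f x ∂ν = 0)
    {v : ℝ} (hv : ∫ x, f x ^ 2 ∂ν = v) (hv0 : 0 < v) {a : ℕ → ℝ} (ha : Sluggish a)
    {r c : ℝ} (hr : 0 < r) (hc : c < r ^ 2 / (2 * v)) :
    ∀ᶠ d : ℕ in atTop,
      (Measure.pi fun _ : Fin d => ν).real {x | r * (a d * √(d : ℝ)) ≤ ∑ i, f (x i)} ≤
        Real.exp (-(c * a d ^ 2)) := by
  have h1 : Integrable f ν := by
    have := hmom 1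
    simp only [pow_one] at this
    exact this.mono hf.aestronglyMeasurable (ae_of_all _ fun x => by simp)
  have h2 : Integrable (fun x => f x ^ 2) ν := by simpa using hmom 2
  obtain ⟨c', hcc', hc'⟩ := exists_between (max_lt hc (by positivity : 0 < r ^ 2 / (2 * v)))
  have hc'0 : 0 ≤ c' := (le_max_right _ _).trans hcc'.le
  -- The tilt `l = (r / v) a / √d` minimises the Gaussian approximation `-l A + d l² v / 2` of the
  -- exponent, where `A = r a √d`.
  have hE : Tendsto (fun d : ℕ => -(r ^ 2 / v) +
      r ^ 2 / (2 * v) * Real.exp (r / v * (a d / √√(d : ℝ)))) atTop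
        (nhds (-(r ^ 2 / v) + r ^ 2 / (2 * v) * Real.exp (r / v * 0))) :=
    (((Real.continuous_exp.tendsto _).comp (ha.tendsto_div.const_mul _)).const_mul _).const_add _
  have hlim : -(r ^ 2 / v) + r ^ 2 / (2 * v) * Real.exp (r / v * 0) < -c' := by
    have : r ^ 2 / v = 2 * (r ^ 2 / (2 * v)) := by field_simp
    rw [this, mul_zero, Real.exp_zero]
    linarith
  have hfirst : ∀ᶠ d : ℕ in atTop, (Measure.pi fun _ : Fin d => ν).real
      {x | r * (a d * √(d : ℝ)) ≤ ∑ i, trunc f (√√(d : ℝ)) (x i)} ≤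
        Real.exp (-(c' * a d ^ 2)) := by
    filter_upwards [hE.eventually_lt_const hlim, eventually_ge_atTop 1] with d hd hd1
    have hd0 : (0 : ℝ) < d := by exact_mod_cast hd1
    have had := ha.1 d
    refine (chernoff_trunc ν hf h1 h2 h0 (l := r / v * (a d / √(d : ℝ))) (t := √√(d : ℝ))
      (by positivity) (by positivity) d _).trans ?_
    rw [Real.exp_le_exp, hv]
    have hs : √(d : ℝ) ^ 2 = d := Real.sq_sqrt hd0.le
    have hss : √√(d : ℝ) ^ 2 = √(d : ℝ) := Real.sq_sqrt (Real.sqrt_nonneg _)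
    have hs0 : 0 < √(d : ℝ) := Real.sqrt_pos.2 hd0
    have hss0 : 0 < √√(d : ℝ) := Real.sqrt_pos.2 hs0
    have hlt : r / v * (a d / √(d : ℝ)) * √√(d : ℝ) = r / v * (a d / √√(d : ℝ)) := by
      rw [mul_assoc]
      congr 1
      rw [div_mul_eq_mul_div, div_eq_div_iff hs0.ne' hss0.ne', mul_assoc, ← sq, hss]
    rw [hlt]
    generalize Real.exp (r / v * (a d / √√(d : ℝ))) = E at hd
    have hexp : -(r / v * (a d / √(d : ℝ)) * (r * (a d * √(d : ℝ)))) +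
        d * ((r / v * (a d / √(d : ℝ))) ^ 2 / 2 * E * v) =
          (-(r ^ 2 / v) + r ^ 2 / (2 * v) * E) * a d ^ 2 := by
      nth_rewrite 3 [← hs]
      field_simp
    rw [hexp, ← neg_mul]
    exact mul_le_mul_of_nonneg_right hd.le (sq_nonneg _)
  filter_upwards [eventually_add_le ha ((le_max_left _ _).trans_lt hcc') hfirst
    (eventually_exceed_le ν hmom ha hc'0)] with d hd
  refine le_trans ?_ hd
  refine (measureReal_mono ?_).trans (measureReal_union_le _ _)
  intro x hx
  by_cases h : ∃ i, √√(d : ℝ) < f (x i)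
  · exact Or.inr h
  · left
    push Not at h
    have : ∀ i, trunc f (√√(d : ℝ)) (x i) = f (x i) := fun i => if_pos (h i)
    simpa [this] using hx

/-! ### Moments under the density -/

/-- A log-derivative tending to `-∞` makes `h` decay at least like `exp (-2x)`, so `exp x * h x`
is integrable at `+∞`. -/
theorem integrableOn_Ioi_of_tail {h : ℝ → ℝ} (hpos : ∀ x, 0 < h x)
    (hd : Differentiable ℝ fun x => Real.log (h x)) (ht : Tendsto (dl h) atTop atBot) :
    IntegrableOn (fun x => Real.exp x * h x) (Ioi 0) := by
  have hcont : Continuous h := by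
    have := Real.continuous_exp.comp hd.continuous
    simpa only [Function.comp_def, Real.exp_log (hpos _)] using this
  obtain ⟨R, hR⟩ := eventually_atTop.1 (ht.eventually_le_atBot (-2))
  have hanti : AntitoneOn (fun x => Real.log (h x) + 2 * x) (Ici R) := by
    have hder : ∀ x, HasDerivAt (fun x => Real.log (h x) + 2 * x) (dl h x + 2 * 1) x := fun x =>
      (hd x).hasDerivAt.add ((hasDerivAt_id x).const_mul 2)
    refine antitoneOn_of_deriv_nonpos (convex_Ici R)
      (fun v _ => (hder v).continuousAt.continuousWithinAt)
      (fun v _ => (hder v).differentiableAt.differentiableWithinAt) fun x hx => ?_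
    rw [interior_Ici] at hx
    rw [(hder x).deriv]
    linarith [hR x (le_of_lt hx)]
  refine integrable_of_isBigO_exp_neg one_pos (by fun_prop) ?_
  refine Asymptotics.IsBigO.of_bound (Real.exp (Real.log (h R) + 2 * R)) ?_
  filter_upwards [eventually_ge_atTop R] with x hx
  have h1 := hanti (mem_Ici.2 le_rfl) (mem_Ici.2 hx) hx
  rw [Real.norm_of_nonneg (mul_pos (Real.exp_pos _) (hpos x)).le,
    Real.norm_of_nonneg (Real.exp_pos _).le]
  nth_rewrite 1 [← Real.exp_log (hpos x)]
  rw [← Real.exp_add, ← Real.exp_add, Real.exp_le_exp]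
  simp only at h1
  linarith

theorem integrable_exp_abs_mul {ρ : ℝ → ℝ} (hpos : ∀ x, 0 < ρ x)
    (hd : Differentiable ℝ fun x => Real.log (ρ x)) (htail : SuperExpTails ρ) :
    Integrable (fun x => Real.exp |x| * ρ x) := by
  have h1 := integrableOn_Ioi_of_tail hpos hd htail.1
  have h2 : IntegrableOn (fun x => Real.exp x * ρ (-x)) (Ioi 0) := by
    refine integrableOn_Ioi_of_tail (fun x => hpos (-x)) (hd.comp differentiable_neg) ?_
    have : dl (fun x => ρ (-x)) = fun x => -dl ρ (-x) := by
      funext x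
      exact deriv_comp_neg (fun x => Real.log (ρ x)) x
    rw [this]
    exact tendsto_neg_atTop_atBot.comp (htail.2.comp tendsto_neg_atTop_atBot)
  have h3 : IntegrableOn (fun x => Real.exp |x| * ρ x) (Ioi 0) :=
    h1.congr_fun (fun x hx => by simp only [abs_of_pos (mem_Ioi.1 hx)]) measurableSet_Ioi
  have h4 : IntegrableOn (fun x => Real.exp |x| * ρ x) (Iio 0) := by
    have h5 : IntegrableOn (fun x => Real.exp |-x| * ρ (-x)) (Ioi 0) :=
      h2.congr_fun (fun x hx => by simp only [abs_neg, abs_of_pos (mem_Ioi.1 hx)])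
        measurableSet_Ioi
    rw [← neg_zero] at h5
    simpa only [neg_neg] using h5.comp_neg_Iio
  rw [← integrableOn_univ, ← Iic_union_Ioi (a := (0 : ℝ))]
  exact ((integrableOn_Iic_iff_integrableOn_Iio (by finiteness)).2 h4).union h3

/-- Since `f` grows slower than `exp (s|x|)` for `s = 1/p`, its `p`-th power grows slower than
`exp |x|`. -/
theorem integrable_pow_mul {ρ f : ℝ → ℝ} (hmeas : Measurable ρ) (hpos : ∀ x, 0 < ρ x)
    (hint : Integrable ρ) (hd : Differentiable ℝ fun x => Real.log (ρ x))
    (htail : SuperExpTails ρ) (hf : MemS 0 f) (p : ℕ) :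
    Integrable (fun x => |f x| ^ p * ρ x) := by
  rcases Nat.eq_zero_or_pos p with rfl | hp
  · simpa using hint
  have hp' : (0 : ℝ) < p := by exact_mod_cast hp
  obtain ⟨C, hC⟩ := hf.2 (1 / p) (by positivity) 0 le_rfl
  have hfm : Measurable f := hf.1.continuous.measurable
  refine ((integrable_exp_abs_mul hpos hd htail).const_mul (C ^ p)).mono'
    ((hfm.abs.pow_const p).mul hmeas).aestronglyMeasurable (ae_of_all _ fun x => ?_)
  have h1 : Real.exp (-(1 / p * |x|)) * |f x| ≤ C := by
    simpa using hC (mem_range_self x)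
  rw [Real.norm_of_nonneg (mul_nonneg (by positivity) (hpos x).le), ← mul_assoc]
  refine mul_le_mul_of_nonneg_right ?_ (hpos x).le
  have h2 : |f x| ≤ C * Real.exp (1 / p * |x|) := by
    rw [Real.exp_neg] at h1
    rwa [inv_mul_le_iff₀ (Real.exp_pos _), mul_comm] at h1
  calc |f x| ^ p ≤ (C * Real.exp (1 / p * |x|)) ^ p := pow_le_pow_left₀ (abs_nonneg _) h2 p
    _ = C ^ p * Real.exp |x| := by
      rw [mul_pow, ← Real.exp_nat_mul]
      congr 2
      field_simp

theorem integral_density {ρ : ℝ → ℝ} (hmeas : Measurable ρ) (hpos : ∀ x, 0 < ρ x) (g : ℝ → ℝ) :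
    ∫ x, g x ∂(volume.withDensity fun x => ENNReal.ofReal (ρ x)) = rhoE ρ g := by
  rw [integral_withDensity_eq_integral_toReal_smul hmeas.ennreal_ofReal
    (ae_of_all _ fun x => ENNReal.ofReal_lt_top)]
  refine integral_congr_ae (ae_of_all _ fun x => ?_)
  simp only [ENNReal.toReal_ofReal (hpos x).le, smul_eq_mul, mul_comm]

theorem integrable_density_iff {ρ : ℝ → ℝ} (hmeas : Measurable ρ) (hpos : ∀ x, 0 < ρ x)
    (g : ℝ → ℝ) :
    Integrable g (volume.withDensity fun x => ENNReal.ofReal (ρ x)) ↔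
      Integrable (fun x => g x * ρ x) := by
  rw [integrable_withDensity_iff hmeas.ennreal_ofReal
    (ae_of_all _ fun x => ENNReal.ofReal_lt_top)]
  simp only [ENNReal.toReal_ofReal (hpos _).le]

/-! ### The upper bound for closed sets -/

/-- **Lemma (moderate deviations upper bound).** For `f ∈ S⁰` with `ρ(f) = 0`, `ρ(f²) > 0`,
a sluggish sequence `a` and `(X_1,…,X_d) ~ ρ_d`, for every closed `F ⊆ ℝ`:
`limsup_d a_d^{-2} log P[Σ_{i=1}^d f(X_i)/(a_d√d) ∈ F] ≤ -inf{x²/(2ρ(f²)) : x ∈ F}`. -/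
theorem stmt15 (ρ : ℝ → ℝ) (hmeas : Measurable ρ) (hpos : ∀ x, 0 < ρ x)
    (hint : ∫ x, ρ x = 1) (hlog : MemS 4 fun x => Real.log (ρ x))
    (htail : SuperExpTails ρ)
    (f : ℝ → ℝ) (hf : MemS 0 f) (hf0 : rhoE ρ f = 0)
    (hf2 : 0 < rhoE ρ fun x => f x ^ 2)
    (a : ℕ → ℝ) (ha : Sluggish a)
    (F : Set ℝ) (hF : IsClosed F) :
    Filter.limsup
        (fun d : ℕ =>
          (((((a d) ^ 2)⁻¹ : ℝ) : EReal) *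
            ENNReal.log
              (pm ρ d {x | (∑ i, f (x i)) / (a d * Real.sqrt d) ∈ F})))
        atTop ≤
      -sInf ((fun x : ℝ => ((x ^ 2 / (2 * rhoE ρ fun s => f s ^ 2) : ℝ) : EReal)) '' F) := by
  set v := rhoE ρ fun x => f x ^ 2 with hvdef
  set ν : Measure ℝ := volume.withDensity fun x => ENNReal.ofReal (ρ x) with hν
  have hρint : Integrable ρ := by
    by_contra h
    rw [integral_undef h] at hint
    exact zero_ne_one hint
  have : IsProbabilityMeasure ν := by
    refine ⟨?_⟩
    rw [hν, withDensity_apply _ MeasurableSet.univ, Measure.restrict_univ,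
      ← ofReal_integral_eq_lintegral_ofReal hρint (ae_of_all _ fun x => (hpos x).le), hint,
      ENNReal.ofReal_one]
  have hlogd : Differentiable ℝ fun x => Real.log (ρ x) := hlog.1.differentiable (by norm_num)
  have hfm : Measurable f := hf.1.continuous.measurable
  have hmom : ∀ p : ℕ, Integrable (fun x => |f x| ^ p) ν := fun p =>
    (integrable_density_iff hmeas hpos _).2
      (integrable_pow_mul hmeas hpos hρint hlogd htail hf p)
  have hmean : ∫ x, f x ∂ν = 0 := (integral_density hmeas hpos f).trans hf0
  have hvar : ∫ x, f x ^ 2 ∂ν = v := integral_density hmeas hpos _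
  rcases F.eq_empty_or_nonempty with rfl | hne
  · have : ∀ d : ℕ, (((((a d) ^ 2)⁻¹ : ℝ) : EReal) * ENNReal.log
        (pm ρ d {x | (∑ i, f (x i)) / (a d * Real.sqrt d) ∈ (∅ : Set ℝ)})) = ⊥ := by
      intro d
      have had := ha.1 d
      simp only [mem_empty_iff_false, ofPred_false, measure_empty, ENNReal.log_zero]
      exact EReal.coe_mul_bot_of_pos (by positivity)
    exact (limsup_congr (Eventually.of_forall this)).trans_le (by simp)
  -- The rate function attains its infimum over `F` at a point `y` of least absolute value.
  obtain ⟨y, hyF, hy⟩ := hF.exists_infDist_eq_dist hne 0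
  have hmin : ∀ z ∈ F, |y| ≤ |z| := by
    intro z hz
    have := Metric.infDist_le_dist_of_mem (x := (0 : ℝ)) hz
    rw [hy] at this
    simpa [Real.dist_eq] using this
  have key : ∀ c : ℝ, c < y ^ 2 / (2 * v) → ∀ᶠ d : ℕ in atTop,
      (pm ρ d).real {x | (∑ i, f (x i)) / (a d * Real.sqrt d) ∈ F} ≤
        Real.exp (-(c * a d ^ 2)) := by
    intro c hc
    have hprob : ∀ d, IsProbabilityMeasure (pm ρ d) := fun d => by
      change IsProbabilityMeasure (Measure.pi fun _ : Fin d => ν)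
      infer_instance
    rcases lt_or_ge c 0 with hc0 | hc0
    · refine Eventually.of_forall fun d => measureReal_le_one.trans (Real.one_le_exp ?_)
      nlinarith [sq_nonneg (a d)]
    have hr : 0 < |y| := by
      rw [abs_pos]
      rintro rfl
      norm_num at hc
      linarith
    obtain ⟨c', hcc', hc'⟩ := exists_between hc
    rw [← sq_abs y] at hc'
    have hup := one_sided ν hfm hmom hmean hvar hf2 ha hr hc'
    have hdown := one_sided ν (f := fun x => -f x) hfm.neg (by simpa using hmom)
      (by rw [integral_neg, hmean, neg_zero]) (by simpa using hvar) hf2 ha hr hc'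
    filter_upwards [eventually_add_le ha hcc' hup hdown, eventually_ge_atTop 1] with d hd hd1
    refine le_trans ((measureReal_mono ?_).trans (measureReal_union_le _ _)) hd
    intro x hx
    have had := ha.1 d
    have hd0 : (0 : ℝ) < d := by exact_mod_cast hd1
    have hpos' : 0 < a d * Real.sqrt d := by positivity
    have h1 := hmin _ hx
    rw [abs_div, abs_of_pos hpos', le_div_iff₀ hpos'] at h1
    rcases le_abs.1 h1 with h | h
    · exact Or.inl h
    · right
      simpa [Finset.sum_neg_distrib] using h
  have hlim : ∀ c : ℝ, c < y ^ 2 / (2 * v) → Filter.limsup (fun d : ℕ =>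
      (((((a d) ^ 2)⁻¹ : ℝ) : EReal) * ENNReal.log
        (pm ρ d {x | (∑ i, f (x i)) / (a d * Real.sqrt d) ∈ F}))) atTop ≤ ((-c : ℝ) : EReal) := by
    intro c hc
    refine limsup_le_of_le (by isBoundedDefault) ?_
    filter_upwards [key c hc] with d hd
    have had := ha.1 d
    have hfin : pm ρ d {x | (∑ i, f (x i)) / (a d * Real.sqrt d) ∈ F} ≠ ⊤ := by
      change (Measure.pi fun _ : Fin d => ν) _ ≠ ⊤
      exact measure_ne_top _ _
    have h1 := ENNReal.log_monotone ((ENNReal.le_ofReal_iff_toReal_le hfin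
      (Real.exp_pos _).le).2 hd)
    rw [ENNReal.log_ofReal_of_pos (Real.exp_pos _), Real.log_exp] at h1
    refine (mul_le_mul_of_nonneg_left h1 (EReal.coe_nonneg.2 (by positivity))).trans ?_
    rw [← EReal.coe_mul]
    refine le_of_eq (congrArg _ ?_)
    field_simp
  refine EReal.le_neg_of_le_neg ((sInf_le (mem_image_of_mem _ hyF)).trans ?_)
  refine EReal.ge_of_forall_gt_iff_ge.1 fun c hc => ?_
  refine EReal.le_neg_of_le_neg ?_
  rw [← EReal.coe_neg]
  exact hlim c (EReal.coe_lt_coe_iff.1 hc)
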